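/- arXiv:2310.11452 — 3 statements merged into one kernel-verified Lean document; each statement's English description precedes it below -/
import Mathlib

section
/- Let r ≥ 3 and n ≥ 32. If G is an n-vertex K_{r+1}-free graph that is not traceable, then e(G) ≤ e(T_r(n-1)), and equality holds if G is the disjoint union of T_r(n-1) and an isolated vertex. -/
/-!
A maximal non-traceable graph `M` containing `G` gains a Hamiltonian path from every new edge `uv`;
counting crossings along that path gives `deg u + deg v ≤ n - 2`. Choosing the non-adjacent pair
with `deg u + deg v` largest and `deg u ≤ deg v`, every non-neighbour of `v` has degree at most
`deg u`, so some `i ≤ n / 2` vertices all have degree less than `i` in `M`, hence in `G`. They meet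
at most `i (i - 1)` edges and, by Turán's theorem, the remaining vertices span at most
`e(T_r(n - i))`.

The sum `i (i - 1) + e(T_r(n - i))` is at most `e(T_r(n - 1))` except for `r = 3` and `n = 2 i`.
There, if one of the `i` vertices has at least `i - 1` neighbours among the other half, then that
half is triangle-free up to one vertex, so Mantel's bound applies to it; otherwise at most
`i (i - 2)` edges run between the halves. Either way enough edges are saved.
-/

section TuranGraph
open Finset SimpleGraph

variable {r s : ℕ}

lemma card_edgeFinset_turanGraph_of_le {n : ℕ} (h : n ≤ r) :
    #(turanGraph n r).edgeFinset = n.choose 2 := by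
  have hcard := card_edgeFinset_top_eq_card_choose_two (V := Fin n)
  rw [Fintype.card_fin] at hcard
  convert! hcard
  exact turanGraph_eq_top.2 (.inr h)

lemma card_edgeFinset_turanGraph_succ_add_div (hr : 0 < r) (n : ℕ) :
    #(turanGraph (n + 1) r).edgeFinset + n / r = #(turanGraph n r).edgeFinset + n := by
  induction n using Nat.strong_induction_on with
  | _ n ih =>
    rcases lt_or_ge n r with hnr | hrn
    · rw [card_edgeFinset_turanGraph_of_le hnr.le, card_edgeFinset_turanGraph_of_le hnr,
        Nat.div_eq_of_lt hnr, Nat.choose_succ_succ' n 1, Nat.choose_one_right, add_zero, add_comm]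
    · obtain ⟨m, rfl⟩ := Nat.exists_eq_add_of_le' hrn
      have hm := ih m (by omega)
      rw [show m + r + 1 = (m + 1) + r by ring, card_edgeFinset_turanGraph_add,
        card_edgeFinset_turanGraph_add, Nat.add_div_right _ hr, add_mul]
      omega

lemma two_mul_choose_two_add_self (n : ℕ) : 2 * n.choose 2 + n = n ^ 2 := by
  rw [Nat.choose_two_right, Nat.mul_div_cancel' (Nat.even_mul_pred_self n).two_dvd]
  cases n with
  | zero => rfl
  | succ n => rw [Nat.add_sub_cancel]; ring

lemma two_mul_card_edgeFinset_turanGraph_add (hr : 0 < r) (n : ℕ) :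
    2 * r * #(turanGraph n r).edgeFinset + n % r * (r - n % r) = (r - 1) * n ^ 2 := by
  induction n using Nat.strong_induction_on with
  | _ n ih =>
    rcases lt_or_ge n r with hnr | hrn
    · obtain ⟨d, rfl⟩ := Nat.exists_eq_add_of_lt hnr
      rw [card_edgeFinset_turanGraph_of_le hnr.le, Nat.mod_eq_of_lt hnr, add_assoc n d 1,
        Nat.add_sub_cancel_left, ← add_assoc, Nat.add_sub_cancel]
      linear_combination (n + d + 1) * two_mul_choose_two_add_self n
    · obtain ⟨m, rfl⟩ := Nat.exists_eq_add_of_le' hrn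
      have hm := ih m (by omega)
      obtain ⟨d, rfl⟩ := Nat.exists_eq_add_of_le' hr
      rw [card_edgeFinset_turanGraph_add, Nat.add_mod_right, Nat.add_sub_cancel]
      rw [Nat.add_sub_cancel] at hm
      linear_combination hm + (d + 1) * two_mul_choose_two_add_self (d + 1)

lemma sq_le_three_mul_card_edgeFinset_turanGraph_three (n : ℕ) :
    n ^ 2 ≤ 3 * #(turanGraph n 3).edgeFinset + 1 := by
  have hexact := two_mul_card_edgeFinset_turanGraph_add (r := 3) (by norm_num) n
  have hmod : n % 3 * (3 - n % 3) ≤ 2 := by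
    have := Nat.mod_lt n (by norm_num : 3 > 0)
    interval_cases n % 3 <;> norm_num
  omega

-- `s * k * (2 * n + k) / (2 * (s + 1))` is the growth of `(1 - 1 / (s + 1)) * n ^ 2 / 2` from `n`
-- to `n + k`; the correction `s * k` absorbs the rounding.
lemma le_card_edgeFinset_turanGraph_add (hsr : s < r) (n k : ℕ) :
    2 * (s + 1) * #(turanGraph n r).edgeFinset + s * k * (2 * n + k) ≤
      2 * (s + 1) * #(turanGraph (n + k) r).edgeFinset + s * k := by
  induction k with
  | zero => simp
  | succ k ih =>
    have hsucc := card_edgeFinset_turanGraph_succ_add_div (by omega : 0 < r) (n + k)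
    have hdiv : (s + 1) * ((n + k) / r) ≤ n + k :=
      (Nat.mul_le_mul_right _ hsr).trans (Nat.mul_div_le _ _)
    rw [← add_assoc n k 1]
    linarith [congrArg (2 * (s + 1) * ·) hsucc]

lemma mul_add_card_edgeFinset_turanGraph_le (hr : 3 ≤ r) {n k : ℕ} (hkn : k + 2 ≤ n) :
    (k + 1) * k + #(turanGraph n r).edgeFinset ≤ #(turanGraph (n + k) r).edgeFinset := by
  have hgrowth := le_card_edgeFinset_turanGraph_add hr n k
  nlinarith [Nat.mul_le_mul_left k hkn]

lemma mul_add_card_edgeFinset_turanGraph_succ_le (hr : 4 ≤ r) (k : ℕ) :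
    (k + 1) * k + #(turanGraph (k + 1) r).edgeFinset ≤ #(turanGraph (2 * k + 1) r).edgeFinset := by
  have hr0 : 0 < r := by omega
  induction k with
  | zero => simp
  | succ k ih =>
    have hsmall := card_edgeFinset_turanGraph_succ_add_div hr0 (k + 1)
    have hlarge := card_edgeFinset_turanGraph_succ_add_div hr0 (2 * k + 1)
    have hlarger := card_edgeFinset_turanGraph_succ_add_div hr0 (2 * k + 1 + 1)
    have hdiv := Nat.div_le_div_left (c := 4) hr (by norm_num) (a := 2 * k + 1)
    have hdiv' := Nat.div_le_div_left (c := 4) hr (by norm_num) (a := 2 * k + 1 + 1)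
    rw [show 2 * (k + 1) + 1 = 2 * k + 1 + 1 + 1 by ring]
    have hdiv_add : (2 * k + 1) / 4 + (2 * k + 1 + 1) / 4 ≤ k := by omega
    linarith [Nat.zero_le ((k + 1) / r)]

end TuranGraph

section Traceable
open List Finset SimpleGraph

variable {V : Type*}

/-- A graph is traceable if it has a Hamiltonian path, encoded as an enumeration of the vertices in
which consecutive vertices are adjacent, so that paths can be cut and reversed as lists. The graph
without vertices counts as traceable. -/
def IsTraceable [Fintype V] (G : SimpleGraph V) : Prop :=
  ∃ l : List V, l ~ (univ : Finset V).toList ∧ l.IsChain G.Adj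

lemma IsTraceable.exists_isHamiltonian [Fintype V] [DecidableEq V] [Nonempty V]
    {G : SimpleGraph V} (h : IsTraceable G) : ∃ (u w : V) (p : G.Walk u w), p.IsHamiltonian := by
  obtain ⟨l, hl, hchain⟩ := h
  have hmem (v : V) : v ∈ l := hl.mem_iff.2 (mem_toList.2 (mem_univ v))
  have hne : l ≠ [] := List.ne_nil_of_mem (hmem (Classical.arbitrary V))
  have hsupport := Walk.support_ofSupport hne hchain
  have hpath : (Walk.ofSupport l hne hchain).IsPath :=
    .mk' (hsupport.symm ▸ hl.nodup_iff.2 (nodup_toList _))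
  exact ⟨_, _, _, hpath.isHamiltonian_of_mem (hsupport.symm ▸ hmem)⟩

lemma isTraceable_top [Fintype V] : IsTraceable (⊤ : SimpleGraph V) :=
  ⟨_, .refl _, List.Pairwise.isChain (nodup_toList _)⟩

lemma countP_dropLast_add_countP_tail_le {p q : V → Prop} [DecidablePred p] [DecidablePred q] :
    ∀ {l : List V}, l.IsChain (fun a b => ¬(p a ∧ q b)) →
      l.dropLast.countP p + l.tail.countP q ≤ l.length - 1
  | [], _ => by simp
  | [_], _ => by simp
  | x :: y :: l, h => by
    obtain ⟨hxy, h⟩ := List.isChain_cons_cons.1 h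
    have ih := countP_dropLast_add_countP_tail_le h
    simp only [List.tail_cons, List.dropLast_cons_cons, List.countP_cons, List.length_cons,
      decide_eq_true_eq, Nat.add_sub_cancel] at ih ⊢
    split_ifs <;> first | omega | tauto

lemma isChain_adj_reverse {G : SimpleGraph V} {l : List V} :
    l.reverse.IsChain G.Adj ↔ l.IsChain G.Adj := by
  rw [List.isChain_reverse]
  exact List.IsChain.iff fun a b => G.adj_comm b a

variable [Fintype V] {G : SimpleGraph V} [DecidableRel G.Adj]

lemma degree_eq_countP {l : List V} (hl : l ~ (univ : Finset V).toList) (u : V) :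
    G.degree u = l.countP (G.Adj u) := by
  rw [hl.countP_eq, ← Multiset.coe_countP, coe_toList, ← card_neighborFinset_eq_degree,
    neighborFinset_eq_filter, Finset.card_def, Finset.filter_val, Multiset.countP_eq_card_filter]

lemma countP_add_countP_lt_length (hG : ¬IsTraceable G) {P Q : List V} {u v : V}
    (hPQ : P ++ [u] ++ v :: Q ~ (univ : Finset V).toList) (hP : (P ++ [u]).IsChain G.Adj)
    (hQ : (v :: Q).IsChain G.Adj) :
    (P ++ [u]).countP (G.Adj u) + (P ++ [u]).countP (G.Adj v) < (P ++ [u]).length := by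
  have hend {L : List V} (hL : L ~ P ++ [u]) (hchain : L.IsChain G.Adj) :
      ∀ x ∈ L.getLast?, ¬G.Adj x v := fun x hx hxv =>
    hG ⟨L ++ v :: Q, (hL.append_right _).trans hPQ, hchain.append hQ <| by grind⟩
  have hhead : ∀ x ∈ (P ++ [u]).head?, ¬G.Adj v x := fun x hx hvx =>
    hend (List.reverse_perm _) (isChain_adj_reverse.2 hP) x (by rwa [List.getLast?_reverse])
      hvx.symm
  have hcross : (P ++ [u]).IsChain fun a b => ¬(G.Adj u a ∧ G.Adj v b) := by
    rw [List.isChain_iff_forall_rel_of_append_cons_cons]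
    rintro a b X Y hXY ⟨hua, hvb⟩
    have hlast : (b :: Y).getLast? = some u := by
      simpa using (congrArg List.getLast? hXY).symm
    rw [hXY, List.isChain_append_cons_cons] at hP
    -- Reversing the path behind `a` makes `b` its last vertex.
    refine hend (L := X ++ [a] ++ (b :: Y).reverse) ?_ ?_ b ?_ hvb.symm
    · rw [hXY, List.append_cons X a (b :: Y)]
      exact (List.reverse_perm _).append_left _
    · refine hP.1.append (isChain_adj_reverse.2 hP.2.2) ?_
      simpa [hlast, List.head?_reverse, -List.reverse_cons] using hua.symm
    · rw [List.getLast?_append_of_ne_nil _ (by simp), List.getLast?_reverse]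
      rfl
  have hcount := countP_dropLast_add_countP_tail_le hcross
  have hu : (P ++ [u]).dropLast.countP (G.Adj u) = (P ++ [u]).countP (G.Adj u) := by
    simp [List.countP_append]
  have hv : (P ++ [u]).tail.countP (G.Adj v) = (P ++ [u]).countP (G.Adj v) := by
    cases P <;> simp_all
  have hpos : 0 < (P ++ [u]).length := by simp
  omega

lemma degree_add_degree_add_two_le_of_isTraceable_sup_edge {u v : V} (hG : ¬IsTraceable G)
    (h : IsTraceable (G ⊔ edge u v)) : G.degree u + G.degree v + 2 ≤ Fintype.card V := by
  obtain ⟨l, hl, hchain⟩ := h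
  obtain ⟨a, b, X, Y, rfl, hab⟩ : ∃ a b X Y, l = X ++ a :: b :: Y ∧ ¬G.Adj a b := by
    by_contra! hadj
    exact hG ⟨l, hl, List.isChain_iff_forall_rel_of_append_cons_cons.2 hadj⟩
  obtain ⟨hX, huv, hY⟩ := List.isChain_append_cons_cons.1 hchain
  rw [List.append_cons X a (b :: Y)] at hl
  wlog hau : a = u ∧ b = v generalizing u v
  · rw [add_comm (G.degree u)]
    rw [edge_comm] at hchain hX huv hY
    refine this hchain hX huv hY ?_
    rw [sup_adj, edge_adj] at huv
    tauto
  obtain ⟨rfl, rfl⟩ := hau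
  have hdisj := (List.nodup_append.1 (hl.nodup_iff.2 (nodup_toList _))).2.2
  have hsub {L : List V} (hL : L.IsChain (G ⊔ edge a b).Adj) (hLab : a ∉ L ∨ b ∉ L) :
      L.IsChain G.Adj := by
    refine hL.imp_of_mem_imp fun x y hx hy hxy => ?_
    rw [sup_adj, edge_adj] at hxy
    grind
  replace hX := hsub hX (.inr fun hb => hdisj b hb b (by simp) rfl)
  replace hY := hsub hY (.inl fun ha => hdisj a (by simp) a ha rfl)
  have hXcount := countP_add_countP_lt_length hG hl hX hY
  have hYcount := countP_add_countP_lt_length hG (P := Y.reverse) (u := b) (v := a)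
    (Q := X.reverse) (.trans (by simpa using List.reverse_perm (X ++ [a] ++ b :: Y)) hl)
    (by simpa using isChain_adj_reverse.2 hY) (by simpa using isChain_adj_reverse.2 hX)
  have hcard : (X ++ [a] ++ b :: Y).length = Fintype.card V := by
    rw [hl.length_eq, length_toList, card_univ]
  rw [degree_eq_countP hl a, degree_eq_countP hl b, ← hcard, List.countP_append (l₁ := X ++ [a]),
    List.countP_append (l₁ := X ++ [a]), List.length_append (as := X ++ [a])]
  rw [← List.reverse_cons, List.countP_reverse, List.countP_reverse, List.length_reverse] at hYcount
  omega

lemma exists_degree_lt_card_of_degree_add_degree_le (hne : G ≠ ⊤)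
    (hdeg : ∀ u v, u ≠ v → ¬G.Adj u v → G.degree u + G.degree v + 2 ≤ Fintype.card V) :
    ∃ S : Finset V, S.Nonempty ∧ 2 * #S ≤ Fintype.card V ∧ ∀ x ∈ S, G.degree x < #S := by
  classical
  obtain ⟨a, b, hab, hadj⟩ := ne_top_iff_exists_not_adj.1 hne
  obtain ⟨⟨u, v⟩, ⟨huv, huv_adj⟩, hmax⟩ :=
    Set.exists_max_image {q : V × V | q.1 ≠ q.2 ∧ ¬G.Adj q.1 q.2}
      (fun q => G.degree q.1 + G.degree q.2) (Set.toFinite _) ⟨(a, b), hab, hadj⟩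
  simp only [Set.mem_ofPred_eq, and_imp, Prod.forall] at huv huv_adj hmax
  wlog hle : G.degree u ≤ G.degree v generalizing u v
  · refine this v u huv.symm (mt .symm huv_adj) (fun x y hxy hadj => ?_) (le_of_not_ge hle)
    exact (hmax x y hxy hadj).trans_eq (add_comm _ _)
  have hsum := hdeg u v huv huv_adj
  have hcard : G.degree u + 1 ≤ #(insert v (G.neighborFinset v))ᶜ := by
    rw [card_compl, card_insert_of_notMem (G.notMem_neighborFinset_self v),
      card_neighborFinset_eq_degree]
    omega
  obtain ⟨S, hSsub, hS⟩ := exists_subset_card_eq hcard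
  refine ⟨S, card_pos.1 (by omega), by omega, fun x hx => ?_⟩
  obtain ⟨hxv, hvx⟩ : x ≠ v ∧ ¬G.Adj v x := by simpa using hSsub hx
  have hxmax := hmax x v hxv (mt .symm hvx)
  omega

lemma exists_degree_lt_card_of_not_isTraceable (hG : ¬IsTraceable G) :
    ∃ S : Finset V, S.Nonempty ∧ 2 * #S ≤ Fintype.card V ∧ ∀ x ∈ S, G.degree x < #S := by
  classical
  obtain ⟨M, hGM, hM⟩ := Finite.exists_le_maximal (p := fun H => ¬IsTraceable H) hG
  have hne : M ≠ ⊤ := by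
    rintro rfl
    exact hM.prop isTraceable_top
  have hore (u v : V) (huv : u ≠ v) (hadj : ¬M.Adj u v) :
      M.degree u + M.degree v + 2 ≤ Fintype.card V :=
    degree_add_degree_add_two_le_of_isTraceable_sup_edge hM.prop <|
      not_not.1 (hM.not_prop_of_gt (M.lt_sup_edge u v huv hadj))
  obtain ⟨S, hS, hcard, hdeg⟩ := exists_degree_lt_card_of_degree_add_degree_le hne hore
  exact ⟨S, hS, hcard, fun x hx => (degree_le_of_le hGM).trans_lt (hdeg x hx)⟩

end Traceable

section Interedges
open Finset SimpleGraph

variable {V : Type*} {G : SimpleGraph V} [DecidableRel G.Adj]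

lemma card_interedges_eq_sum (S T : Finset V) :
    #(G.interedges S T) = ∑ x ∈ S, #{y ∈ T | G.Adj x y} := by
  simp_rw [interedges_def, card_filter, sum_product]

lemma card_interedges_le_card_mul {S T : Finset V} {d : ℕ}
    (h : ∀ x ∈ S, #{y ∈ T | G.Adj x y} ≤ d) : #(G.interedges S T) ≤ #S * d := by
  rw [card_interedges_eq_sum]
  exact sum_le_card_nsmul _ _ _ h

lemma card_interedges_le_sum_degree [Fintype V] (S T : Finset V) :
    #(G.interedges S T) ≤ ∑ x ∈ S, G.degree x := by
  rw [card_interedges_eq_sum]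
  exact sum_le_sum fun x _ => card_le_card fun y hy =>
    (G.mem_neighborFinset x y).2 (mem_filter.1 hy).2

lemma card_interedges_self_eq_two_mul (R : Finset V) :
    #(G.interedges R R) = 2 * #(G.induce (R : Set V)).edgeFinset := by
  rw [two_mul_card_edgeFinset]
  symm
  refine card_nbij (Prod.map Subtype.val Subtype.val) ?_ ?_ ?_
  · rintro ⟨x, y⟩ hxy
    simpa [mem_interedges_iff] using hxy
  · exact (Subtype.val_injective.prodMap Subtype.val_injective).injOn
  · rintro ⟨x, y⟩ hxy
    obtain ⟨hx, hy, hadj⟩ := G.mem_interedges_iff.1 hxy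
    exact ⟨(⟨x, hx⟩, ⟨y, hy⟩), by simpa using hadj, rfl⟩

lemma card_interedges_self_le_of_cliqueFreeOn {r : ℕ} {R : Finset V}
    (h : G.CliqueFreeOn R (r + 1)) :
    #(G.interedges R R) ≤ 2 * #(turanGraph #R r).edgeFinset := by
  have hturan := ((G.cliqueFree_induce_iff (R : Set V) (r + 1)).2 h).card_edgeFinset_le
  simp only [coe_sort_coe, Fintype.card_coe] at hturan
  rw [card_interedges_self_eq_two_mul, card_edgeFinset_turanGraph]
  exact Nat.mul_le_mul_left 2 hturan

variable [DecidableEq V]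

lemma card_interedges_insert_self_le (z : V) (Q : Finset V) :
    #(G.interedges (insert z Q) (insert z Q)) ≤ #(G.interedges Q Q) + 2 * #Q := by
  have hsub : G.interedges (insert z Q) (insert z Q) ⊆
      G.interedges Q Q ∪ ({z} ×ˢ Q ∪ Q ×ˢ {z}) := by
    rintro ⟨x, y⟩ hxy
    have hne : x ≠ y := (G.mem_interedges_iff.1 hxy).2.2.ne
    simp only [mem_interedges_iff, mem_insert, mem_union, mem_product, mem_singleton] at hxy ⊢
    grind
  calc #(G.interedges (insert z Q) (insert z Q))
      ≤ #(G.interedges Q Q) + (#({z} ×ˢ Q) + #(Q ×ˢ {z})) :=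
        (card_le_card hsub).trans <| (card_union_le _ _).trans <|
          Nat.add_le_add_left (card_union_le _ _) _
    _ = #(G.interedges Q Q) + 2 * #Q := by
        rw [card_product, card_product, card_singleton, one_mul, mul_one, two_mul]

variable [Fintype V]

lemma sum_degree_eq_card_interedges_add (S T : Finset V) :
    ∑ x ∈ S, G.degree x = #(G.interedges S T) + #(G.interedges S Tᶜ) := by
  rw [card_interedges_eq_sum, card_interedges_eq_sum, ← sum_add_distrib]
  refine sum_congr rfl fun x _ => ?_
  rw [← card_neighborFinset_eq_degree, neighborFinset_eq_filter, card_filter, card_filter,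
    card_filter, sum_add_sum_compl]

lemma two_mul_card_edgeFinset_eq_sum_degree_add (S : Finset V) :
    2 * #G.edgeFinset =
      ∑ x ∈ S, G.degree x + #(G.interedges S Sᶜ) + #(G.interedges Sᶜ Sᶜ) := by
  rw [← sum_degrees_eq_twice_card_edges, ← sum_add_sum_compl S,
    sum_degree_eq_card_interedges_add Sᶜ S, add_assoc]
  congr 2
  have := G.symm
  exact Rel.card_interedges_comm Sᶜ S

end Interedges

section LowDegree
open Finset SimpleGraph

variable {V : Type*} {G : SimpleGraph V} {r : ℕ}

lemma cliqueFreeOn_of_subset_neighborSet (hfree : G.CliqueFree (r + 1)) {Q : Set V} {v : V}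
    (hv : Q ⊆ G.neighborSet v) : G.CliqueFreeOn Q r := by
  have hnbr : G.CliqueFreeOn (Set.univ ∩ G.neighborSet v) r :=
    CliqueFreeOn.of_succ G hfree.cliqueFreeOn (Set.mem_univ v)
  exact CliqueFreeOn.subset G (Set.subset_inter (Set.subset_univ Q) hv) hnbr

variable [DecidableRel G.Adj]

lemma card_interedges_self_le_of_le_card_filter_adj (hfree : G.CliqueFree (r + 2))
    {R : Finset V} {v : V} {m : ℕ} (hR : #R = m + 1) (hv : m ≤ #{x ∈ R | G.Adj v x}) :
    #(G.interedges R R) ≤ 2 * #(turanGraph m r).edgeFinset + 2 * m := by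
  classical
  obtain ⟨Q, hQ, rfl⟩ := exists_subset_card_eq hv
  have hQR : Q ⊆ R := hQ.trans (filter_subset _ _)
  have hdiff : #(R \ Q) = 1 := by rw [card_sdiff_of_subset hQR, hR, Nat.add_sub_cancel_left]
  obtain ⟨z, -, rfl⟩ := (covBy_iff_card_sdiff_eq_one.2 ⟨hQR, hdiff⟩).exists_finset_insert
  have hQfree : G.CliqueFreeOn Q (r + 1) :=
    cliqueFreeOn_of_subset_neighborSet hfree fun x hx => (mem_filter.1 (hQ hx)).2
  exact (card_interedges_insert_self_le z Q).trans <|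
    Nat.add_le_add_right (card_interedges_self_le_of_cliqueFreeOn hQfree) _

variable [Fintype V] {S : Finset V}

lemma sum_degree_le_of_degree_lt_card (hdeg : ∀ x ∈ S, G.degree x < #S) :
    ∑ x ∈ S, G.degree x ≤ #S * (#S - 1) :=
  sum_le_card_nsmul _ _ _ fun x hx => Nat.le_sub_one_of_lt (hdeg x hx)

lemma card_edgeFinset_le_of_degree_lt_card (hfree : G.CliqueFree (r + 1))
    (hdeg : ∀ x ∈ S, G.degree x < #S) :
    #G.edgeFinset ≤ #S * (#S - 1) + #(turanGraph (Fintype.card V - #S) r).edgeFinset := by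
  classical
  have hedges := two_mul_card_edgeFinset_eq_sum_degree_add (G := G) S
  have hsum := sum_degree_le_of_degree_lt_card hdeg
  have hcross := card_interedges_le_sum_degree (G := G) S Sᶜ
  have hcompl := card_interedges_self_le_of_cliqueFreeOn
    (hfree.cliqueFreeOn (s := (Sᶜ : Finset V)))
  rw [card_compl] at hcompl
  omega

lemma card_edgeFinset_le_of_card_eq_two_mul (hfree : G.CliqueFree 4) (hS : 8 ≤ #S)
    (hcard : Fintype.card V = 2 * #S) (hdeg : ∀ x ∈ S, G.degree x < #S) :
    #G.edgeFinset ≤ #(turanGraph (2 * #S - 1) 3).edgeFinset := by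
  classical
  obtain ⟨k, hk⟩ := Nat.exists_eq_add_of_le' (show 2 ≤ #S by omega)
  have hSc : #Sᶜ = k + 2 := by rw [card_compl]; omega
  have hedges := two_mul_card_edgeFinset_eq_sum_degree_add (G := G) S
  have hsum := sum_degree_le_of_degree_lt_card hdeg
  have hbound := sq_le_three_mul_card_edgeFinset_turanGraph_three (2 * k + 3)
  rw [hk, Nat.add_sub_assoc (by norm_num)] at hsum
  rw [show 2 * #S - 1 = 2 * k + 3 by omega]
  by_cases hv : ∃ v ∈ S, k + 1 ≤ #{y ∈ Sᶜ | G.Adj v y}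
  · obtain ⟨v, -, hv⟩ := hv
    have hcross := card_interedges_le_sum_degree (G := G) S Sᶜ
    have hcompl := card_interedges_self_le_of_le_card_filter_adj hfree hSc hv
    have hmantel : 2 * 2 * #(turanGraph (k + 1) 2).edgeFinset ≤ (2 - 1) * (k + 1) ^ 2 :=
      mul_card_edgeFinset_turanGraph_le
    obtain rfl | hk7 := (show 6 ≤ k by omega).eq_or_lt
    · omega
    · nlinarith only [hedges, hsum, hbound, hcross, hcompl, hmantel, hk7]
  · push Not at hv
    have hcross := card_interedges_le_card_mul fun x hx => Nat.le_of_lt_succ (hv x hx)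
    have hcompl := card_interedges_self_le_of_cliqueFreeOn
      (hfree.cliqueFreeOn (s := (Sᶜ : Finset V)))
    have hturan : 2 * 3 * #(turanGraph (k + 2) 3).edgeFinset ≤ (3 - 1) * (k + 2) ^ 2 :=
      mul_card_edgeFinset_turanGraph_le
    rw [hk] at hcross
    rw [hSc] at hcompl
    nlinarith only [hedges, hsum, hbound, hcross, hcompl, hturan]

lemma card_edgeFinset_le_of_not_isTraceable (hr : 3 ≤ r)
    (hn : 4 ≤ r ∨ Odd (Fintype.card V) ∨ 16 ≤ Fintype.card V) (hfree : G.CliqueFree (r + 1))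
    (hG : ¬IsTraceable G) :
    #G.edgeFinset ≤ #(turanGraph (Fintype.card V - 1) r).edgeFinset := by
  obtain ⟨S, hne, hcard, hdeg⟩ := exists_degree_lt_card_of_not_isTraceable hG
  obtain ⟨k, hk⟩ := Nat.exists_eq_add_of_le' hne.card_pos
  have hedges := card_edgeFinset_le_of_degree_lt_card hfree hdeg
  rw [hk, Nat.add_sub_cancel] at hedges
  obtain hlt | heq := hcard.lt_or_eq
  · rw [show Fintype.card V - 1 = Fintype.card V - (k + 1) + k by omega]
    exact hedges.trans (mul_add_card_edgeFinset_turanGraph_le hr (by omega))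
  obtain rfl | hr4 := hr.eq_or_lt
  · have hS : 8 ≤ #S := by grind
    rw [← heq]
    exact card_edgeFinset_le_of_card_eq_two_mul hfree hS heq.symm hdeg
  · rw [show Fintype.card V - (k + 1) = k + 1 by omega] at hedges
    rw [show Fintype.card V - 1 = 2 * k + 1 by omega]
    exact hedges.trans (mul_add_card_edgeFinset_turanGraph_succ_le hr4 k)

lemma card_edgeFinset_eq_of_degree_eq_zero_of_induce_iso {W : Type*} [Fintype W] {H : SimpleGraph W}
    [DecidableRel H.Adj] {v : V} (hv : G.degree v = 0) (f : G.induce ({v}ᶜ : Set V) ≃g H) :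
    #G.edgeFinset = #H.edgeFinset := by
  classical
  rw [← f.card_edgeFinset_eq, card_edgeFinset_induce_compl_singleton,
    card_edgeFinset_deleteIncidenceSet, hv, Nat.sub_zero]

end LowDegree

-- For `r = 3` and even `n` with `6 ≤ n ≤ 14` the bound fails: join `n / 2 + 1` independent vertices
-- to `T_2(n / 2 - 1)`.
theorem cliqueFree_not_traceable_edge_bound_general {V : Type*} [Fintype V] [DecidableEq V]
    [Nonempty V] (G : SimpleGraph V) [DecidableRel G.Adj] (r : ℕ) (hr : 3 ≤ r)
    (hn : 4 ≤ r ∨ Odd (Fintype.card V) ∨ 16 ≤ Fintype.card V) (hfree : G.CliqueFree (r + 1))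
    (hnt : ¬∃ (u w : V) (p : G.Walk u w), p.IsHamiltonian) :
    G.edgeFinset.card ≤ (SimpleGraph.turanGraph (Fintype.card V - 1) r).edgeFinset.card ∧
    ((∃ v : V, G.degree v = 0 ∧
        Nonempty ((G.induce ({v}ᶜ : Set V)) ≃g
          SimpleGraph.turanGraph (Fintype.card V - 1) r)) →
      G.edgeFinset.card = (SimpleGraph.turanGraph (Fintype.card V - 1) r).edgeFinset.card) := by
  refine ⟨card_edgeFinset_le_of_not_isTraceable hr hn hfree
    (mt IsTraceable.exists_isHamiltonian hnt), ?_⟩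
  rintro ⟨v, hv, ⟨f⟩⟩
  exact card_edgeFinset_eq_of_degree_eq_zero_of_induce_iso hv f

/-- Theorem 5.3 (r ≥ 3, n ≥ 32): an `n`-vertex `K_{r+1}`-free graph that is not traceable
has at most `e(T_r(n-1))` edges, with equality if `G` is the Turán graph `T_r(n-1)`
together with an isolated vertex. -/
theorem cliqueFree_not_traceable_edge_bound
    {V : Type} [Fintype V] [DecidableEq V]
    (G : SimpleGraph V) [DecidableRel G.Adj] (n r : ℕ)
    (hr : 3 ≤ r) (hn : 32 ≤ n) (hcard : Fintype.card V = n)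
    (hfree : G.CliqueFree (r + 1))
    (hnt : ¬ ∃ (u w : V) (p : G.Walk u w), p.IsHamiltonian) :
    G.edgeFinset.card ≤ (SimpleGraph.turanGraph (n - 1) r).edgeFinset.card ∧
    ((∃ v : V, G.degree v = 0 ∧
        Nonempty ((G.induce ({v}ᶜ : Set V)) ≃g SimpleGraph.turanGraph (n - 1) r)) →
      G.edgeFinset.card = (SimpleGraph.turanGraph (n - 1) r).edgeFinset.card) := by
  subst hcard
  have : Nonempty V := Fintype.card_pos_iff.1 (by omega)
  exact cliqueFree_not_traceable_edge_bound_general G r hr (.inr (.inr (by omega))) hfree hnt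
end

section
/- Let r ≥ 3 and n ≥ 32. If G is an n-vertex K_{r+1}-free graph that is not Hamiltonian-connected, then e(G) ≤ e(T_r(n-1)) + 2, and equality holds if G is obtained from T_r(n-1) by adding a new vertex of degree 2 whose two neighbors are adjacent. -/
/-!
Delete `j` vertices of degree at most `d` from a `K_{r+1}`-free graph on `n` vertices: by Turán's
theorem at most `e(T_r(n - j)) + j * d` edges were present. So it suffices that a graph without a
Hamiltonian `u`-`w` path has many vertices of small degree.

These come from a closure argument in the style of Bondy–Chvátal. If adding an edge `xy` creates a
Hamiltonian `u`-`w` path, removing `xy` from that path leaves two paths that together span the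
graph, and a rotation argument gives `deg x + deg y ≤ n`. Hence an edge-maximal graph without a
Hamiltonian `u`-`w` path satisfies this for all non-adjacent `x ≠ y`; taking such a pair with
`deg x + deg y` largest and `deg x ≤ deg y`, all non-neighbours of `y` have degree at most `deg x`.
This yields some `k` with `2 * k + 2 ≤ n` and at least `k` vertices of degree at most `k + 1`, of
which it is enough to delete `min k 7`.
-/

open SimpleGraph

section HamiltonianPath

variable {V : Type*} {G : SimpleGraph V} {a b u v w x y : V}

lemma support_append_cons (p : G.Walk u a) (hab : G.Adj a b) (q : G.Walk b w) :
    (p.append (.cons hab q)).support = p.support ++ q.support := by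
  rw [Walk.support_append, Walk.support_cons, List.tail_cons]

lemma exists_eq_append_cons_of_mem_darts {p : G.Walk u w} {d : G.Dart} (hd : d ∈ p.darts) :
    ∃ (q : G.Walk u d.fst) (q' : G.Walk d.snd w), p = q.append (.cons d.adj q') := by
  obtain ⟨q, q', hp⟩ := (Walk.isSubwalk_toWalk_adj_iff_mem_darts p).2 hd
  exact ⟨q, q', hp.trans (q.append_assoc _ q').symm⟩

lemma countP_support_add_countP_tail_support_le (p : G.Walk u w) {P Q : V → Prop}
    [DecidablePred P] [DecidablePred Q] (h : ∀ d ∈ p.darts, P d.fst → ¬ Q d.snd) :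
    p.support.countP (P ·) + p.support.tail.countP (Q ·) ≤ p.support.length := by
  induction p with
  | nil => simpa using List.countP_le_length (p := (P ·)) (l := [_])
  | @cons u v w huv p ih =>
    simp only [Walk.darts_cons, List.mem_cons, forall_eq_or_imp] at h
    have hp := ih h.2
    have hQ : p.support.countP (Q ·) = p.support.tail.countP (Q ·) + if Q v then 1 else 0 := by
      conv_lhs => rw [← p.cons_tail_support, List.countP_cons]
      simp only [decide_eq_true_eq]
    have hPQ : (if P u then 1 else 0) + (if Q v then 1 else 0) ≤ 1 := by
      have := h.1
      split_ifs <;> simp_all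
    simp only [Walk.support_cons, List.tail_cons, List.countP_cons, List.length_cons,
      decide_eq_true_eq]
    lia

lemma countP_adj_support_add_countP_adj_support_le [DecidableRel G.Adj] (q : G.Walk b w)
    (h : ∀ d ∈ q.darts, G.Adj a d.fst → ¬ G.Adj b d.snd) :
    q.support.countP (G.Adj a ·) + q.support.countP (G.Adj b ·) ≤ q.support.length := by
  have htail : q.support.countP (G.Adj b ·) = q.support.tail.countP (G.Adj b ·) := by
    conv_lhs => rw [← q.cons_tail_support, List.countP_cons_of_neg (by simp)]
  rw [htail]
  exact countP_support_add_countP_tail_support_le q h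

variable [DecidableEq V]

lemma degree_eq_countP_of_forall_count_eq_one {l : List V} (hl : ∀ v, l.count v = 1)
    [DecidablePred (G.Adj x)] [Fintype (G.neighborSet x)] :
    G.degree x = l.countP (G.Adj x ·) := by
  have hnodup : l.Nodup := List.nodup_iff_count_le_one.2 fun v ↦ (hl v).le
  rw [List.countP_eq_length_filter, ← List.toFinset_card_of_nodup (hnodup.filter _), degree]
  congr 1
  ext v
  simp [← List.one_le_count_iff, hl]

/-- There is a Hamiltonian path of `G` from `u` to `w`. -/
def HasHamiltonianPath (G : SimpleGraph V) (u w : V) : Prop :=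
  ∃ p : G.Walk u w, p.IsHamiltonian

/-- Any two distinct vertices of `G` are the ends of a Hamiltonian path. -/
def HamiltonianConnected (G : SimpleGraph V) : Prop :=
  ∀ u w : V, u ≠ w → HasHamiltonianPath G u w

lemma HasHamiltonianPath.symm (h : HasHamiltonianPath G u w) : HasHamiltonianPath G w u := by
  obtain ⟨p, hp⟩ := h
  exact ⟨p.reverse, fun v ↦ by rw [Walk.support_reverse, List.count_reverse, hp v]⟩

lemma hasHamiltonianPath_top [Finite V] (huw : u ≠ w) :
    HasHamiltonianPath (⊤ : SimpleGraph V) u w := by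
  have := Fintype.ofFinite V
  let l := u :: (((Finset.univ.erase u).erase w).toList ++ [w])
  have hne : l ≠ [] := List.cons_ne_nil _ _
  have hhead : l.head hne = u := rfl
  have hlast : l.getLast hne = w := by simp [l]
  have hnodup : l.Nodup := by grind [Finset.nodup_toList, Finset.mem_toList]
  have hmem (v : V) : v ∈ l := by grind [Finset.mem_toList]
  have hchain : l.IsChain (⊤ : SimpleGraph V).Adj := (hnodup.imp fun h ↦ h).isChain
  refine ⟨(Walk.ofSupport l hne hchain).copy hhead hlast, fun v ↦ ?_⟩
  rw [Walk.support_copy, Walk.support_ofSupport]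
  exact List.count_eq_one_of_mem hnodup (hmem v)

/-- Rotation: reverse the part of `q` before the dart `d` and enter it from `a`. -/
lemma hasHamiltonianPath_of_mem_darts {p : G.Walk u a} {q : G.Walk b w}
    (hpq : ∀ v, (p.support ++ q.support).count v = 1) {d : G.Dart} (hd : d ∈ q.darts)
    (had : G.Adj a d.fst) (hbd : G.Adj b d.snd) : HasHamiltonianPath G u w := by
  obtain ⟨q₁, q₂, rfl⟩ := exists_eq_append_cons_of_mem_darts hd
  refine ⟨p.append (.cons had (q₁.reverse.append (.cons hbd q₂))), fun v ↦ ?_⟩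
  simpa only [support_append_cons, Walk.support_reverse, List.count_append, List.count_reverse]
    using hpq v

lemma degree_add_degree_le_of_not_hasHamiltonianPath [Fintype V] [DecidableRel G.Adj]
    (hno : ¬ HasHamiltonianPath G u w) {p : G.Walk u a} {q : G.Walk b w}
    (hpq : ∀ v, (p.support ++ q.support).count v = 1) :
    G.degree a + G.degree b ≤ Fintype.card V := by
  have hq := countP_adj_support_add_countP_adj_support_le q fun d hd had hbd ↦
    hno (hasHamiltonianPath_of_mem_darts hpq hd had hbd)
  have hqp : ∀ v, (q.reverse.support ++ p.reverse.support).count v = 1 := fun v ↦ by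
    simpa [add_comm] using hpq v
  have hp := countP_adj_support_add_countP_adj_support_le p.reverse fun d hd hbd had ↦
    hno (hasHamiltonianPath_of_mem_darts hqp hd hbd had).symm
  have hcard : (p.support ++ q.support).length = Fintype.card V := by
    simpa using Fintype.card_congr (List.getEquivOfForallCountEqOne _ hpq)
  simp only [Walk.support_reverse, List.countP_reverse, List.length_reverse] at hp
  rw [degree_eq_countP_of_forall_count_eq_one hpq, degree_eq_countP_of_forall_count_eq_one hpq,
    List.countP_append, List.countP_append, ← hcard, List.length_append]
  lia

lemma exists_walks_of_hasHamiltonianPath_sup_edge (hno : ¬ HasHamiltonianPath G u w)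
    (h : HasHamiltonianPath (G ⊔ edge x y) u w) :
    ∃ a b, s(a, b) = s(x, y) ∧ ∃ (q : G.Walk u a) (q' : G.Walk b w),
      ∀ v, (q.support ++ q'.support).count v = 1 := by
  obtain ⟨p, hp⟩ := h
  have mem_edgeSet {e : Sym2 V} (he : e ∈ (G ⊔ edge x y).edgeSet) (hne : e ≠ s(x, y)) :
      e ∈ G.edgeSet := by
    rw [edgeSet_sup] at he
    exact he.resolve_right fun h ↦ hne (edgeSet_edge_subset h)
  have hxy : s(x, y) ∈ p.edges := by
    by_contra hxy
    refine hno ⟨p.transfer G fun e he ↦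
      mem_edgeSet (p.edges_subset_edgeSet he) (ne_of_mem_of_not_mem he hxy), fun v ↦ ?_⟩
    rw [Walk.support_transfer, hp v]
  obtain ⟨d, hd, hdxy⟩ := List.mem_map.1 hxy
  obtain ⟨q, q', rfl⟩ := exists_eq_append_cons_of_mem_darts hd
  have hnodup := hp.isPath.isTrail.edges_nodup
  rw [Walk.edges_append, Walk.edges_cons, List.nodup_append, List.nodup_cons] at hnodup
  have hq : ∀ e ∈ q.edges, e ∈ G.edgeSet := fun e he ↦
    mem_edgeSet (q.edges_subset_edgeSet he) (hdxy ▸ hnodup.2.2 e he _ List.mem_cons_self)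
  have hq' : ∀ e ∈ q'.edges, e ∈ G.edgeSet := fun e he ↦
    mem_edgeSet (q'.edges_subset_edgeSet he) (hdxy ▸ ne_of_mem_of_not_mem he hnodup.2.1.1)
  refine ⟨d.fst, d.snd, hdxy, q.transfer G hq, q'.transfer G hq', fun v ↦ ?_⟩
  rw [Walk.support_transfer, Walk.support_transfer, ← support_append_cons q d.adj, hp v]

lemma HasHamiltonianPath.of_sup_edge [Fintype V] [DecidableRel G.Adj]
    (h : HasHamiltonianPath (G ⊔ edge x y) u w) (hdeg : Fintype.card V < G.degree x + G.degree y) :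
    HasHamiltonianPath G u w := by
  by_contra hno
  obtain ⟨a, b, hab, q, q', hqq'⟩ := exists_walks_of_hasHamiltonianPath_sup_edge hno h
  have hle := degree_add_degree_le_of_not_hasHamiltonianPath hno hqq'
  rcases Sym2.eq_iff.1 hab with ⟨rfl, rfl⟩ | ⟨rfl, rfl⟩ <;> lia

end HamiltonianPath

section LowDegree

variable {V : Type*} [Fintype V] {G : SimpleGraph V} [DecidableRel G.Adj] {u w : V}

lemma exists_le_card_filter_degree_le_of_ne_top (hcard : 4 ≤ Fintype.card V) (hG : G ≠ ⊤)
    (hdeg : ∀ x y, x ≠ y → ¬ G.Adj x y → G.degree x + G.degree y ≤ Fintype.card V) :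
    ∃ k, 0 < k ∧ 2 * k + 2 ≤ Fintype.card V ∧
      k ≤ (Finset.univ.filter fun v ↦ G.degree v ≤ k + 1).card := by
  classical
  let nonAdj : Finset (V × V) := {p | p.1 ≠ p.2 ∧ ¬ G.Adj p.1 p.2}
  have hne : nonAdj.Nonempty := by
    obtain ⟨x, y, hxy, hadj⟩ := ne_top_iff_exists_not_adj.1 hG
    exact ⟨(x, y), by simp [nonAdj, hxy, hadj]⟩
  obtain ⟨⟨x, y⟩, hmem, hmax⟩ := nonAdj.exists_max_image (fun p ↦ G.degree p.1 + G.degree p.2) hne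
  simp only [nonAdj, Finset.mem_filter_univ, Prod.forall] at hmem hmax
  wlog hle : G.degree x ≤ G.degree y generalizing x y
  · exact this y x ⟨hmem.1.symm, fun h ↦ hmem.2 h.symm⟩
      (fun a b hab ↦ (hmax a b hab).trans_eq (add_comm _ _)) (le_of_not_ge hle)
  have hxy := hdeg x y hmem.1 hmem.2
  rcases Nat.lt_or_ge (G.degree x) 2 with hx | hx
  · exact ⟨1, one_pos, by lia, Finset.card_pos.2 ⟨x, by rw [Finset.mem_filter_univ]; lia⟩⟩
  · refine ⟨G.degree x - 1, by lia, by lia, ?_⟩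
    calc G.degree x - 1 ≤ Gᶜ.degree y := by rw [degree_compl]; lia
      _ ≤ _ := Finset.card_le_card fun v hv ↦ ?_
    rw [mem_neighborFinset, compl_adj] at hv
    have hvy := hmax v y ⟨hv.1.symm, fun h ↦ hv.2 h.symm⟩
    rw [Finset.mem_filter_univ]
    lia

lemma exists_le_card_filter_degree_le_of_not_hasHamiltonianPath [DecidableEq V] (huw : u ≠ w)
    (hcard : 4 ≤ Fintype.card V) (hno : ¬ HasHamiltonianPath G u w) :
    ∃ k, 0 < k ∧ 2 * k + 2 ≤ Fintype.card V ∧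
      k ≤ (Finset.univ.filter fun v ↦ G.degree v ≤ k + 1).card := by
  classical
  obtain ⟨H, hGH, hH⟩ :=
    Finite.exists_le_maximal (p := fun H : SimpleGraph V ↦ ¬ HasHamiltonianPath H u w) hno
  have hdeg (x y : V) (hxy : x ≠ y) (hadj : ¬ H.Adj x y) :
      H.degree x + H.degree y ≤ Fintype.card V := by
    by_contra! hlt
    have hlt_sup : H < H ⊔ edge x y := lt_sup_edge _ _ _ hxy hadj
    exact hH.prop ((not_not.1 (hH.not_prop_of_gt hlt_sup)).of_sup_edge hlt)
  have hH_top : H ≠ ⊤ := by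
    rintro rfl
    exact hH.prop (hasHamiltonianPath_top huw)
  obtain ⟨k, hk, hk2, hkcard⟩ := exists_le_card_filter_degree_le_of_ne_top hcard hH_top hdeg
  refine ⟨k, hk, hk2, hkcard.trans (Finset.card_le_card fun v hv ↦ ?_)⟩
  rw [Finset.mem_filter_univ] at hv ⊢
  exact (degree_le_of_le hGH).trans hv

end LowDegree

section VertexDeletion

variable {V : Type*} [Fintype V] {G : SimpleGraph V} [DecidableRel G.Adj]

lemma card_edgeFinset_le_card_edgeFinset_induce_compl_add_sum_degree [DecidableEq V]
    (s : Finset V) :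
    G.edgeFinset.card ≤ (G.induce (sᶜ : Set V)).edgeFinset.card + ∑ v ∈ s, G.degree v := by
  have hsub : G.edgeFinset ⊆
      (G.edgeFinset ∩ (sᶜ : Set V).toFinset.sym2) ∪ s.biUnion (G.incidenceFinset ·) := by
    intro e he
    by_cases hes : ∃ v ∈ s, v ∈ e
    · obtain ⟨v, hvs, hve⟩ := hes
      refine Finset.mem_union_right _ (Finset.mem_biUnion.2 ⟨v, hvs, ?_⟩)
      exact (mem_incidenceFinset ..).2 ⟨mem_edgeFinset.1 he, hve⟩
    · refine Finset.mem_union_left _ (Finset.mem_inter.2 ⟨he, Finset.mem_sym2_iff.2 fun v hv ↦ ?_⟩)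
      simpa using fun hvs ↦ hes ⟨v, hvs, hv⟩
  calc G.edgeFinset.card
    _ ≤ (G.edgeFinset ∩ (sᶜ : Set V).toFinset.sym2).card + (s.biUnion (G.incidenceFinset ·)).card :=
      (Finset.card_le_card hsub).trans (Finset.card_union_le _ _)
    _ ≤ (G.induce (sᶜ : Set V)).edgeFinset.card + ∑ v ∈ s, (G.incidenceFinset v).card := by
      rw [← map_edgeFinset_induce, Finset.card_map]
      gcongr
      exact Finset.card_biUnion_le
    _ = _ := by simp only [card_incidenceFinset_eq_degree]

lemma card_edgeFinset_eq_card_edgeFinset_add_degree_of_iso {W : Type*} {H : SimpleGraph W}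
    [Fintype H.edgeSet] {v : V} (f : G.induce ({v}ᶜ : Set V) ≃g H) :
    G.edgeFinset.card = H.edgeFinset.card + G.degree v := by
  classical
  rw [← f.card_edgeFinset_eq, card_edgeFinset_induce_compl_singleton,
    card_edgeFinset_deleteIncidenceSet, Nat.sub_add_cancel (G.degree_le_card_edgeFinset v)]

lemma card_edgeFinset_le_of_cliqueFree_of_degree_le {r d : ℕ} (hfree : G.CliqueFree (r + 1))
    {s : Finset V} (hs : ∀ v ∈ s, G.degree v ≤ d) :
    G.edgeFinset.card ≤
      (turanGraph (Fintype.card V - s.card) r).edgeFinset.card + s.card * d := by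
  classical
  have hcard : Fintype.card ↥(sᶜ : Set V) = Fintype.card V - s.card := by
    simp only [Fintype.card_compl_set, SetLike.coe_sort_coe, Fintype.card_coe]
  have hturan : (G.induce (sᶜ : Set V)).edgeFinset.card ≤
      (turanGraph (Fintype.card ↥(sᶜ : Set V)) r).edgeFinset.card := by
    rw [card_edgeFinset_turanGraph]
    exact (hfree.comap (Embedding.induce _).isContained).card_edgeFinset_le
  rw [hcard] at hturan
  calc G.edgeFinset.card
    _ ≤ _ := card_edgeFinset_le_card_edgeFinset_induce_compl_add_sum_degree s
    _ ≤ _ := Nat.add_le_add hturan (Finset.sum_le_card_nsmul s _ d hs)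

end VertexDeletion

section TuranGraph

variable {m n r : ℕ}

lemma card_edgeFinset_turanGraph_succ (m r : ℕ) :
    (turanGraph (m + 1) r).edgeFinset.card + m / r = (turanGraph m r).edgeFinset.card + m := by
  have card_of_eq_top {n : ℕ} (h : turanGraph n r = ⊤) :
      (turanGraph n r).edgeFinset.card = n.choose 2 := by
    have htop := card_edgeFinset_top_eq_card_choose_two (V := Fin n)
    rw [Fintype.card_fin] at htop
    rw [← htop]
    congr!
  induction m using Nat.strong_induction_on with
  | _ m ih =>
    rcases em (r = 0 ∨ m + 1 ≤ r) with h | h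
    · have hdiv : m / r = 0 := Nat.div_eq_zero_iff.2 (by lia)
      rw [card_of_eq_top (turanGraph_eq_top.2 h), card_of_eq_top (turanGraph_eq_top.2 (by lia)),
        hdiv, Nat.choose_succ_succ', Nat.choose_one_right]
      lia
    · obtain ⟨k, rfl⟩ := Nat.exists_eq_add_of_le' (show r ≤ m by lia)
      have hk := ih k (by lia)
      rw [add_right_comm, card_edgeFinset_turanGraph_add, card_edgeFinset_turanGraph_add,
        Nat.add_div_right _ (by lia), Nat.add_mul]
      lia

lemma card_edgeFinset_turanGraph_add_mul_le {c : ℕ} (hc : c + m / r ≤ m) (j : ℕ) :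
    (turanGraph m r).edgeFinset.card + j * c ≤ (turanGraph (m + j) r).edgeFinset.card := by
  have div_le (j : ℕ) : (m + j) / r ≤ m / r + j := by
    induction j with
    | zero => rfl
    | succ j ih => rw [← add_assoc, Nat.succ_div]; split_ifs <;> lia
  induction j with
  | zero => simp
  | succ j ih =>
    have hsucc := card_edgeFinset_turanGraph_succ (m + j) r
    have := div_le j
    rw [← add_assoc, Nat.succ_mul]
    lia

lemma card_edgeFinset_turanGraph_add_three_le (hr : 3 ≤ r) (m : ℕ) :
    (turanGraph m r).edgeFinset.card + (2 * m + 3) ≤ (turanGraph (m + 3) r).edgeFinset.card := by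
  have hsucc (i : ℕ) : (turanGraph i r).edgeFinset.card + i ≤
      (turanGraph (i + 1) r).edgeFinset.card + i / 3 :=
    (card_edgeFinset_turanGraph_succ i r).symm.trans_le
      (Nat.add_le_add_left (Nat.div_le_div_left hr three_pos) _)
  have h₀ := hsucc m
  have h₁ := hsucc (m + 1)
  have h₂ := hsucc (m + 2)
  lia

lemma exists_card_edgeFinset_turanGraph_add_mul_le {k : ℕ} (hr : 3 ≤ r) (hn : 27 ≤ n) (hk : 0 < k)
    (hkn : 2 * k + 2 ≤ n) :
    ∃ j ≤ k, (turanGraph (n - j) r).edgeFinset.card + j * (k + 1) ≤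
      (turanGraph (n - 1) r).edgeFinset.card + 2 := by
  rcases le_total k 7 with hk7 | hk7
  · have hdiv : (n - k) / r ≤ (n - k) / 3 := Nat.div_le_div_left hr three_pos
    have hturan := card_edgeFinset_turanGraph_add_mul_le (show k + 2 + (n - k) / r ≤ n - k by lia)
      (k - 1)
    rw [show n - k + (k - 1) = n - 1 by lia] at hturan
    have hmul : k * (k + 1) = (k - 1) * (k + 2) + 2 := by
      obtain ⟨k, rfl⟩ := Nat.exists_eq_add_of_lt hk
      simp only [zero_add, Nat.add_sub_cancel]
      ring
    exact ⟨k, le_rfl, by lia⟩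
  · -- `e(T_r(n - 1)) - e(T_r(n - 7)) ≥ 4 * n - 16`, whereas `7 * (k + 1) ≤ 7 * (n / 2)`.
    obtain ⟨m, rfl⟩ := Nat.exists_eq_add_of_le' (show 7 ≤ n by lia)
    have h₀ := card_edgeFinset_turanGraph_add_three_le hr m
    have h₃ := card_edgeFinset_turanGraph_add_three_le hr (m + 3)
    refine ⟨7, hk7, ?_⟩
    rw [show m + 7 - 1 = m + 3 + 3 by lia, Nat.add_sub_cancel]
    lia

end TuranGraph

/-- The constant `27` is optimal: for `n = 26` and `r = 3`, the join of `T_2(13)` with an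
independent set of `13` vertices has `211 > 208 + 2` edges. -/
theorem cliqueFree_not_hamiltonianConnected_edge_bound_general
    {V : Type*} [Fintype V] [DecidableEq V]
    (G : SimpleGraph V) [DecidableRel G.Adj] (n r : ℕ)
    (hr : 3 ≤ r) (hn : 27 ≤ n) (hcard : Fintype.card V = n)
    (hfree : G.CliqueFree (r + 1)) (hnhc : ¬ HamiltonianConnected G) :
    G.edgeFinset.card ≤ (turanGraph (n - 1) r).edgeFinset.card + 2 ∧
    ((∃ v, G.degree v = 2 ∧ Nonempty (G.induce ({v}ᶜ : Set V) ≃g turanGraph (n - 1) r)) →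
      G.edgeFinset.card = (turanGraph (n - 1) r).edgeFinset.card + 2) := by
  constructor
  · simp only [HamiltonianConnected, not_forall] at hnhc
    obtain ⟨u, w, huw, hno⟩ := hnhc
    obtain ⟨k, hk, hkn, hlow⟩ :=
      exists_le_card_filter_degree_le_of_not_hasHamiltonianPath huw (by lia) hno
    obtain ⟨j, hjk, hj⟩ := exists_card_edgeFinset_turanGraph_add_mul_le hr hn hk (hcard ▸ hkn)
    obtain ⟨s, hs, rfl⟩ := Finset.exists_subset_card_eq (hjk.trans hlow)
    have hdeg : ∀ v ∈ s, G.degree v ≤ k + 1 := fun v hv ↦ (Finset.mem_filter.1 (hs hv)).2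
    exact (hcard ▸ card_edgeFinset_le_of_cliqueFree_of_degree_le hfree hdeg).trans hj
  · rintro ⟨v, hv, ⟨f⟩⟩
    rw [card_edgeFinset_eq_card_edgeFinset_add_degree_of_iso f, hv]

/-- Theorem 5.5 (r ≥ 3, n ≥ 32): an `n`-vertex `K_{r+1}`-free graph that is not
Hamiltonian-connected has at most `e(T_r(n-1)) + 2` edges, with equality if `G` is the
Turán graph `T_r(n-1)` plus a new vertex of degree 2 whose two neighbors are adjacent. -/
theorem cliqueFree_not_hamiltonianConnected_edge_bound
    {V : Type} [Fintype V] [DecidableEq V]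
    (G : SimpleGraph V) [DecidableRel G.Adj] (n r : ℕ)
    (hr : 3 ≤ r) (hn : 32 ≤ n) (hcard : Fintype.card V = n)
    (hfree : G.CliqueFree (r + 1))
    (hnhc : ¬ ∀ u w : V, u ≠ w → ∃ p : G.Walk u w, p.IsHamiltonian) :
    G.edgeFinset.card ≤ (SimpleGraph.turanGraph (n - 1) r).edgeFinset.card + 2 ∧
    ((∃ (v a b : V), a ≠ b ∧ G.neighborFinset v = {a, b} ∧ G.Adj a b ∧
        Nonempty ((G.induce ({v}ᶜ : Set V)) ≃g SimpleGraph.turanGraph (n - 1) r)) →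
      G.edgeFinset.card = (SimpleGraph.turanGraph (n - 1) r).edgeFinset.card + 2) := by
  refine (cliqueFree_not_hamiltonianConnected_edge_bound_general G n r hr (by lia) hcard hfree
    hnhc).imp_right fun h ⟨v, a, b, hab, hN, _, hiso⟩ ↦ h ⟨v, ?_, hiso⟩
  rw [← card_neighborFinset_eq_degree, hN, Finset.card_pair hab]
end

section
/- Let t ≥ 2 and n ≥ 2. If G is an n-vertex graph that is not traceable, then the number of t-cliques of G is at most C(n-1, t) (the number of t-cliques of K_{n-1}), with equality if G is the disjoint union of K_{n-1} and an isolated vertex. -/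
/-!
A graph with many missing edges has few cliques, and a non-traceable graph misses many edges.

If at least one but at most `n - 2` edges are missing, then some vertex `v` meets a missing edge but
at most `(n - 1) / 2` of them. Deleting `v` leaves, by induction, a graph with a Hamiltonian path,
and `v` fits somewhere into it: if it did not, `v` would miss both ends of that path and a vertex of
each pair of consecutive vertices, which is more than half of the path. Hence a non-traceable graph
has at least `n - 1` missing edges.

A `t`-set containing a missing edge is not a clique. By the Kruskal-Katona theorem, applied to the
complements of the missing edges, at least `C(n-1, t-1)` of the `t`-sets contain one of `n - 1`
given pairs, which leaves `C(n, t) - C(n-1, t-1) = C(n-1, t)` candidates for cliques.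
-/

open Finset Fintype SimpleGraph
open scoped FinsetFamily

section Insertion

variable {α : Type*} {R : α → α → Prop} [Std.Symm R] [DecidableRel R] {v : α}

-- The surplus `1` for `¬ R v a` pays for a predecessor of `a` that is related to `v`.
theorem length_add_ite_le_two_mul_countP_not_rel {a : α} {l : List α} (hl : (a :: l).IsChain R)
    (hv : ∀ i ≤ l.length, ¬ (a :: l.insertIdx i v).IsChain R) :
    (a :: l).length + (if R v a then 0 else 1) ≤ 2 * (a :: l).countP (¬ R v ·) := by
  induction l generalizing a with
  | nil =>
    have hva : ¬ R v a := fun h ↦ hv 0 le_rfl (by simpa using symm h)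
    simp [hva]
  | cons b l ih =>
    rw [List.isChain_cons_cons] at hl
    have ih := ih hl.2 fun i hi h ↦ hv (i + 1) (by simpa using hi) (by simpa [hl.1] using h)
    by_cases hva : R v a
    · have hvb : ¬ R v b := fun h ↦ hv 0 (Nat.zero_le _) (by simp [symm hva, h, hl.2])
      rw [if_neg hvb] at ih
      rw [List.countP_cons_of_neg (by simpa using hva)]
      simpa [hva] using ih
    · rw [List.countP_cons_of_pos (by simpa using hva), if_neg hva, List.length_cons]
      lia

theorem exists_isChain_insertIdx {l : List α} (hl : l.IsChain R)
    (hv : 2 * l.countP (¬ R v ·) ≤ l.length) :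
    ∃ i ≤ l.length, (l.insertIdx i v).IsChain R := by
  by_contra! hins
  cases l with
  | nil => simpa using hins 0 le_rfl
  | cons a l =>
    have hva : ¬ R v a := fun h ↦ hins 0 (Nat.zero_le _) (by simp [h, hl])
    have hcount := length_add_ite_le_two_mul_countP_not_rel hl
      fun i hi h ↦ hins (i + 1) (by simpa using hi) h
    rw [if_neg hva] at hcount
    lia

end Insertion

section Traceable

variable {V : Type*} [DecidableEq V] {G : SimpleGraph V}

/-- A graph is traceable if it has a Hamiltonian path, the endpoints of which are arbitrary. In
particular the graph without vertices is not traceable. -/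
def Traceable (G : SimpleGraph V) : Prop :=
  ∃ (u w : V) (p : G.Walk u w), p.IsHamiltonian

theorem traceable_iff_exists_list :
    Traceable G ↔ ∃ l : List V, l ≠ [] ∧ l.IsChain G.Adj ∧ l.Nodup ∧ ∀ x, x ∈ l := by
  constructor
  · rintro ⟨u, w, p, hp⟩
    exact ⟨p.support, p.support_ne_nil, p.isChain_adj_support, hp.isPath.support_nodup,
      hp.mem_support⟩
  · rintro ⟨l, hne, hchain, hnodup, hmem⟩
    refine ⟨_, _, Walk.ofSupport l hne hchain, fun x ↦ ?_⟩
    rw [Walk.support_ofSupport]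
    exact List.count_eq_one_of_mem hnodup (hmem x)

theorem traceable_top [Finite V] [Nonempty V] : Traceable (⊤ : SimpleGraph V) := by
  have := Fintype.ofFinite V
  have hnodup : (univ : Finset V).toList.Nodup := nodup_toList _
  exact traceable_iff_exists_list.2
    ⟨univ.toList, by simp [univ_nonempty.ne_empty], hnodup.isChain, hnodup, by simp⟩

theorem traceable_of_traceable_induce_compl_singleton [Fintype V] [DecidableRel G.Adj] {v : V}
    (hG : Traceable (G.induce {v}ᶜ)) (hv : 2 * Gᶜ.degree v < card V) : Traceable G := by
  obtain ⟨l, -, hchain, hnodup, hmem⟩ := traceable_iff_exists_list.1 hG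
  set m : List V := l.map Subtype.val with hm
  have hm_chain : m.IsChain G.Adj := (List.isChain_map _).2 hchain
  have hm_nodup : m.Nodup := hnodup.map Subtype.val_injective
  have hm_mem (x : V) : x ∈ m ↔ x ≠ v := by simp [hm, hmem]
  have hm_toFinset : m.toFinset = univ.erase v := by ext x; simp [hm_mem]
  have hm_length : m.length = card V - 1 := by
    rw [← List.toFinset_card_of_nodup hm_nodup, hm_toFinset, card_erase_of_mem (mem_univ v),
      card_univ]
  have hm_count : m.countP (¬ G.Adj v ·) = Gᶜ.degree v := by
    rw [List.countP_eq_length_filter, ← List.toFinset_card_of_nodup (hm_nodup.filter _),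
      ← card_neighborFinset_eq_degree, neighborFinset_eq_filter, List.toFinset_filter, hm_toFinset]
    congr 1
    ext x
    simp [compl_adj, ne_comm (a := x)]
  have := G.symm
  obtain ⟨i, hi, hins⟩ := exists_isChain_insertIdx (v := v) hm_chain (by lia)
  have hperm := List.perm_insertIdx v m hi
  refine traceable_iff_exists_list.2 ⟨_, by simp [← List.length_pos_iff, hperm.length_eq], hins, ?_,
    fun x ↦ ?_⟩
  · simp [hperm.nodup_iff, hm_nodup, hm_mem]
  · simp [hperm.mem_iff, hm_mem, em]

end Traceable

section Edges

variable {V : Type*} [Fintype V] {G : SimpleGraph V} [DecidableRel G.Adj]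

theorem degree_add_degree_le_card_edgeFinset_add_one {u v : V} (h : G.Adj u v) :
    G.degree u + G.degree v ≤ #G.edgeFinset + 1 := by
  classical
  have hinter : G.incidenceFinset u ∩ G.incidenceFinset v = {s(u, v)} := by
    apply coe_injective
    push_cast
    exact G.incidenceSet_inter_incidenceSet_of_adj h
  rw [← card_incidenceFinset_eq_degree, ← card_incidenceFinset_eq_degree,
    ← card_union_add_card_inter, hinter, card_singleton]
  gcongr
  exact union_subset (G.incidenceFinset_subset u) (G.incidenceFinset_subset v)

theorem exists_degree_pos_two_mul_degree_le (h : G ≠ ⊥) :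
    ∃ v, 0 < G.degree v ∧ 2 * G.degree v ≤ #G.edgeFinset + 1 := by
  obtain ⟨u, v, huv⟩ := ne_bot_iff_exists_adj.1 h
  have hsum := degree_add_degree_le_card_edgeFinset_add_one huv
  have hu : 0 < G.degree u := (G.degree_pos_iff_exists_adj u).2 ⟨v, huv⟩
  have hv : 0 < G.degree v := (G.degree_pos_iff_exists_adj v).2 ⟨u, huv.symm⟩
  obtain hle | hle := le_total (G.degree u) (G.degree v)
  · exact ⟨u, hu, by lia⟩
  · exact ⟨v, hv, by lia⟩

variable [DecidableEq V]

theorem card_edgeFinset_compl_induce_compl_singleton (v : V) :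
    #(G.induce {v}ᶜ)ᶜ.edgeFinset = #Gᶜ.edgeFinset - Gᶜ.degree v := by
  rw [← card_edgeFinset_deleteIncidenceSet, ← card_edgeFinset_induce_compl_singleton]
  congr! 2
  ext x y
  simp [compl_adj, Subtype.ext_iff]

theorem card_cliqueFinset_two : #(G.cliqueFinset 2) = #G.edgeFinset := by
  have himage : G.cliqueFinset 2 = G.edgeFinset.image Sym2.toFinset := by
    ext s
    simp only [mem_cliqueFinset_iff, isNClique_iff, mem_image, mem_edgeFinset, Sym2.exists]
    constructor
    · rintro ⟨hclique, hcard⟩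
      obtain ⟨a, b, hab, rfl⟩ := card_eq_two.1 hcard
      exact ⟨a, b, hclique (by simp) (by simp) hab, Sym2.toFinset_mk_eq⟩
    · rintro ⟨a, b, hab, rfl⟩
      have hab : G.Adj a b := hab
      rw [Sym2.toFinset_mk_eq]
      exact ⟨by simp [hab], card_pair hab.ne⟩
  rw [himage, card_image_of_injective]
  intro e f hef
  ext x
  rw [← Sym2.mem_toFinset, hef, Sym2.mem_toFinset]

end Edges

theorem traceable_of_card_edgeFinset_compl_add_two_le {V : Type*} [Fintype V] [DecidableEq V]
    {G : SimpleGraph V} [DecidableRel G.Adj] (h : #Gᶜ.edgeFinset + 2 ≤ card V) : Traceable G := by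
  induction hn : card V generalizing V with
  | zero => lia
  | succ n ih =>
    have : Nonempty V := card_pos_iff.1 (by lia)
    obtain hG | hG := eq_or_ne Gᶜ ⊥
    · rw [compl_eq_bot.1 hG]
      exact traceable_top
    · obtain ⟨v, hpos, hle⟩ := exists_degree_pos_two_mul_degree_le hG
      have hedges := card_edgeFinset_compl_induce_compl_singleton (G := G) v
      have hcard : card ({v}ᶜ : Set V) = n := by
        rw [card_compl_set, Set.card_singleton, hn, Nat.add_sub_cancel]
      have hdeg := Gᶜ.degree_le_card_edgeFinset v
      exact traceable_of_traceable_induce_compl_singleton (ih (by lia) hcard) (by lia)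

section Shadow

variable {α β : Type*} [DecidableEq α] [DecidableEq β]

theorem shadow_map_mapEmbedding (f : α ↪ β) (𝒜 : Finset (Finset α)) :
    ∂ (𝒜.map (mapEmbedding f).toEmbedding) = (∂ 𝒜).map (mapEmbedding f).toEmbedding := by
  ext t
  simp [mem_shadow_iff, map_erase, and_assoc]

variable [Fintype α] {𝒜 : Finset (Finset α)} {r i k : ℕ}

theorem choose_sub_le_card_shadow_iterate (hir : i ≤ r) (hrk : r ≤ k) (hk : k ≤ card α)
    (h𝒜 : (𝒜 : Set (Finset α)).Sized r) (hcard : k.choose r ≤ #𝒜) :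
    k.choose (r - i) ≤ #(∂^[i] 𝒜) := by
  set e : Finset α ↪ Finset (Fin (card α)) := (mapEmbedding (equivFin α).toEmbedding).toEmbedding
  have hshadow : ∂^[i] (𝒜.map e) = (∂^[i] 𝒜).map e :=
    ((Function.Semiconj.iterate_right (shadow_map_mapEmbedding _ · |>.symm) i) 𝒜).symm
  have hsized : (𝒜.map e : Set (Finset (Fin (card α)))).Sized r := by
    simpa [Set.Sized, e] using h𝒜
  simpa [hshadow] using kruskal_katona_lovasz_form hir hrk hk hsized (by simpa using hcard)

theorem choose_sub_le_card_upShadow_iterate (hir : r + i ≤ card α) (hrk : card α - r ≤ k)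
    (hk : k ≤ card α) (h𝒜 : (𝒜 : Set (Finset α)).Sized r)
    (hcard : k.choose (card α - r) ≤ #𝒜) :
    k.choose (card α - (r + i)) ≤ #(∂⁺^[i] 𝒜) := by
  have hcompls : ∂^[i] 𝒜ᶜˢ = (∂⁺^[i] 𝒜)ᶜˢ :=
    ((Function.Semiconj.iterate_right (fun 𝒜 ↦ (shadow_compls (𝒜 := 𝒜)).symm) i) 𝒜).symm
  rw [← card_compls (∂⁺^[i] 𝒜), ← hcompls, ← Nat.sub_sub]
  exact choose_sub_le_card_shadow_iterate (by lia) hrk hk h𝒜.compls (by simpa using hcard)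

end Shadow

section Cliques

variable {V : Type*} [Fintype V] [DecidableEq V] {G : SimpleGraph V} [DecidableRel G.Adj]
  {m r t : ℕ}

theorem card_cliqueFinset_add_card_upShadow_iterate_le (hr : 2 ≤ r) (i : ℕ) :
    #(G.cliqueFinset (r + i)) + #(∂⁺^[i] (Gᶜ.cliqueFinset r)) ≤ (card V).choose (r + i) := by
  have hdisj : Disjoint (G.cliqueFinset (r + i)) (∂⁺^[i] (Gᶜ.cliqueFinset r)) := by
    rw [Finset.disjoint_left]
    intro s hs hs'
    obtain ⟨u, hu, hus, -⟩ := mem_upShadow_iterate_iff_exists_mem_card_add.1 hs'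
    have hu := mem_cliqueFinset_iff.1 hu
    obtain ⟨x, hx, y, hy, hxy⟩ := one_lt_card.1 (hr.trans_eq hu.card_eq.symm)
    have hxy_not_adj : ¬ G.Adj x y := (hu.isClique hx hy hxy).2
    exact hxy_not_adj ((mem_cliqueFinset_iff.1 hs).isClique (hus hx) (hus hy) hxy)
  rw [← card_union_of_disjoint hdisj, ← card_univ, ← card_powersetCard]
  refine card_le_card (union_subset (fun s hs ↦ ?_) fun s hs ↦ ?_) <;> rw [mem_powersetCard_univ]
  · exact (mem_cliqueFinset_iff.1 hs).card_eq
  · obtain ⟨u, hu, -, hcard⟩ := mem_upShadow_iterate_iff_exists_mem_card_add.1 hs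
    rw [hcard, (mem_cliqueFinset_iff.1 hu).card_eq]

theorem card_cliqueFinset_le_choose_of_choose_le_card_cliqueFinset_compl (hr : 2 ≤ r) (hrt : r ≤ t)
    (h : (card V - 1).choose (r - 1) ≤ #(Gᶜ.cliqueFinset r)) :
    #(G.cliqueFinset t) ≤ (card V - 1).choose t := by
  obtain hlt | htV := lt_or_ge (card V) t
  · calc #(G.cliqueFinset t) ≤ (card V).choose t := G.card_cliqueFinset_le
      _ = 0 := Nat.choose_eq_zero_of_lt hlt
      _ ≤ (card V - 1).choose t := Nat.zero_le _
  obtain ⟨i, rfl⟩ := Nat.exists_eq_add_of_le hrt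
  have hchoose_symm {j : ℕ} (hj : 1 ≤ j) (hjV : j ≤ card V) :
      (card V - 1).choose (card V - j) = (card V - 1).choose (j - 1) :=
    Nat.choose_symm_of_eq_add (by lia)
  have hsized : (Gᶜ.cliqueFinset r : Set (Finset V)).Sized r :=
    fun s hs ↦ (mem_cliqueFinset_iff.1 hs).card_eq
  have hshadow := choose_sub_le_card_upShadow_iterate (k := card V - 1) htV (by lia) (by lia) hsized
    (by rwa [hchoose_symm (by lia) (by lia)])
  rw [hchoose_symm (by lia) htV] at hshadow
  have hpascal : (card V).choose (r + i) =
      (card V - 1).choose (r + i - 1) + (card V - 1).choose (r + i) :=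
    Nat.choose_eq_choose_pred_add (by lia) (by lia)
  have := card_cliqueFinset_add_card_upShadow_iterate_le (G := G) hr i
  lia

theorem card_cliqueFinset_le_of_not_traceable (ht : 2 ≤ t) (hG : ¬ Traceable G) :
    #(G.cliqueFinset t) ≤ (card V - 1).choose t := by
  refine card_cliqueFinset_le_choose_of_choose_le_card_cliqueFinset_compl le_rfl ht ?_
  rw [card_cliqueFinset_two, Nat.choose_one_right]
  by_contra! hlt
  exact hG (traceable_of_card_edgeFinset_compl_add_two_le (by lia))

theorem choose_le_card_cliqueFinset_of_top_isContained
    (h : (⊤ : SimpleGraph (Fin m)) ⊑ G) (t : ℕ) : m.choose t ≤ #(G.cliqueFinset t) := by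
  obtain ⟨s, hs⟩ : ∃ s, G.IsNClique m s := by simpa [CliqueFree] using h.not_cliqueFree
  rw [← hs.card_eq, ← card_powersetCard]
  refine card_le_card fun u hu ↦ ?_
  obtain ⟨hus, hcard⟩ := mem_powersetCard.1 hu
  exact mem_cliqueFinset_iff.2 ⟨hs.isClique.subset hus, hcard⟩

end Cliques

/-- Corollary 7.4(1): for `t ≥ 2` and `n ≥ 2`, an `n`-vertex graph that is not traceable
has at most `C(n-1,t)` `t`-cliques (the number of `t`-cliques of `K_{n-1}`), with
equality if `G` is `K_{n-1}` plus an isolated vertex. -/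
theorem not_traceable_clique_bound
    {V : Type} [Fintype V] [DecidableEq V]
    (G : SimpleGraph V) [DecidableRel G.Adj] (n t : ℕ)
    (ht : 2 ≤ t) (hn : 2 ≤ n) (hcard : Fintype.card V = n)
    (hnt : ¬ ∃ (u w : V) (p : G.Walk u w), p.IsHamiltonian) :
    (G.cliqueFinset t).card ≤ (n - 1).choose t ∧
    ((∃ v : V, G.degree v = 0 ∧
        Nonempty ((G.induce ({v}ᶜ : Set V)) ≃g (⊤ : SimpleGraph (Fin (n - 1))))) →
      (G.cliqueFinset t).card = (n - 1).choose t) := by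
  subst hcard
  have hbound : #(G.cliqueFinset t) ≤ (card V - 1).choose t :=
    card_cliqueFinset_le_of_not_traceable ht hnt
  refine ⟨hbound, ?_⟩
  rintro ⟨v, -, ⟨e⟩⟩
  have hcontained : (⊤ : SimpleGraph (Fin (card V - 1))) ⊑ G :=
    ((Embedding.induce {v}ᶜ).comp e.symm.toEmbedding).isContained
  exact hbound.antisymm (choose_le_card_cliqueFinset_of_top_isContained hcontained t)
end
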